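/- Let C₅ > 0, let Ĝ : [0,1] × ℝ^{2n} → ℝ be a continuous function satisfying |Ĝ(t,w) − Ĝ(t,w')| ≤ (C₅/t²)|w − w'| for all t ∈ (0,1] and all w, w' ∈ ℝ^{2n}, and let f : [0,1] × ℝ^{2n} → [0,1] be a smooth function. Then there exists a continuous function G* : [0,1] × ℝ^{2n} → ℝ which is smooth in the variable w and satisfies, for all t ∈ (0,1] and all w ∈ ℝ^{2n}: (i) |∇_w f(t,w)| · |G*(t,w) − Ĝ(t,w)| ≤ C₅/t², and (ii) |∇_w G*(t,w)| ≤ 2C₅/t². -/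

import Mathlib

/-- `F : [0,1] × ℝ^{2n} → ℝ` is smooth in the variable `w`: all partial derivatives
with respect to `w` of every order exist and are continuous on `[0,1] × ℝ^{2n}`. -/
def SmoothInSecond (n : ℕ) (F : ℝ → EuclideanSpace ℝ (Fin (2 * n)) → ℝ) : Prop :=
  (∀ t ∈ Set.Icc (0:ℝ) 1, ContDiff ℝ (⊤ : ℕ∞) (F t)) ∧
  ∀ k : ℕ, ContinuousOn (fun p : ℝ × EuclideanSpace ℝ (Fin (2 * n)) => iteratedFDeriv ℝ k (F p.1) p.2)
    (Set.Icc (0:ℝ) 1 ×ˢ (Set.univ : Set (EuclideanSpace ℝ (Fin (2 * n)))))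

section aux
open MeasureTheory Set Filter Topology
open scoped ContDiff Manifold Convolution

lemma exists_eps {E : Type*} [NormedAddCommGroup E] [InnerProductSpace ℝ E]
    [FiniteDimensional ℝ E] (B : ℕ → ℝ) (hB : ∀ j, 0 ≤ B j) :
    ∃ ε : E → ℝ, ContDiff ℝ ∞ ε ∧ (∀ w, 0 < ε w) ∧ (∀ w, ε w ≤ 1) ∧
      (∀ w w', |ε w - ε w'| ≤ ‖w - w'‖) ∧
      ∀ w m, (∀ j : ℕ, ‖w‖ < j + 1 → m ≤ B j) → m * ε w ≤ 1 := by
  obtain ⟨ρ, hρ⟩ := SmoothPartitionOfUnity.exists_isSubordinate (I := 𝓘(ℝ, E)) (M := E)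
    (s := univ) isClosed_univ (fun j : ℕ => Metric.ball (0:E) (j+1)) (fun _ => Metric.isOpen_ball)
    (by
      intro x _
      obtain ⟨j, hj⟩ := exists_nat_gt ‖x‖
      refine mem_iUnion.2 ⟨j, ?_⟩
      simp only [Metric.mem_ball, dist_zero_right]
      linarith)
  have hsm : ∀ j, ContDiff ℝ ∞ (ρ j) := fun j => (ρ j).contMDiff.contDiff
  have hcs : ∀ j, HasCompactSupport (ρ j) := fun j =>
    (isCompact_closedBall (0:E) (j+1)).of_isClosed_subset (isClosed_tsupport _)
      ((hρ j).trans Metric.ball_subset_closedBall)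
  have hl : ∀ j, ∃ L : NNReal, LipschitzWith L (ρ j) := fun j =>
    ContDiff.lipschitzWith_of_hasCompactSupport (hcs j) (hsm j) (by simp)
  choose L hL using hl
  set c : ℕ → ℝ := fun j => (1/2)^(j+1) * (1 / ((1 + L j) * (1 + B j))) with hc
  have hD : ∀ j, 1 ≤ (1 + (L j:ℝ)) * (1 + B j) := fun j => by
    nlinarith [hB j, (L j).coe_nonneg, mul_nonneg (L j).coe_nonneg (hB j)]
  have hcpos : ∀ j, 0 < c j := fun j => by
    have := hD j
    have : 0 < (1 + (L j:ℝ)) * (1 + B j) := by linarith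
    positivity
  have hp : ∀ j : ℕ, (1/2:ℝ)^(j+1) ≤ 1 := fun j => pow_le_one₀ (by norm_num) (by norm_num)
  have hc1 : ∀ j, c j ≤ 1 := fun j => by
    have := hD j
    have h2 : 1 / ((1 + (L j:ℝ)) * (1 + B j)) ≤ 1 := by
      rw [div_le_one] <;> linarith
    exact mul_le_one₀ (hp j) (by positivity) h2
  have hcL : ∀ j, c j * L j ≤ (1/2)^(j+1) := fun j => by
    have := hD j
    have h2 : 1 / ((1 + (L j:ℝ)) * (1 + B j)) * L j ≤ 1 := by
      rw [one_div, inv_mul_le_one₀ (by linarith)]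
      nlinarith [hB j, (L j).coe_nonneg, mul_nonneg (L j).coe_nonneg (hB j)]
    calc c j * L j = (1/2)^(j+1) * (1 / ((1 + (L j:ℝ)) * (1 + B j)) * L j) := by rw [hc]; ring
      _ ≤ (1/2)^(j+1) * 1 := by gcongr
      _ = _ := mul_one _
  have hcB : ∀ j, c j * B j ≤ 1 := fun j => by
    have := hD j
    have h2 : 1 / ((1 + (L j:ℝ)) * (1 + B j)) * B j ≤ 1 := by
      rw [one_div, inv_mul_le_one₀ (by linarith)]
      nlinarith [hB j, (L j).coe_nonneg, mul_nonneg (L j).coe_nonneg (hB j)]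
    calc c j * B j = (1/2)^(j+1) * (1 / ((1 + (L j:ℝ)) * (1 + B j)) * B j) := by rw [hc]; ring
      _ ≤ 1 * 1 := mul_le_mul (hp j) h2 (by have := hB j; positivity) (by norm_num)
      _ = _ := mul_one _
  have hfin : ∀ w (S : Finset ℕ), ρ.finsupport w ⊆ S →
      ∑ᶠ j, ρ j w • c j = ∑ j ∈ S, ρ j w * c j := by
    intro w S hS
    rw [finsum_eq_sum_of_support_subset (s := S)]
    · rfl
    · intro j hj
      apply hS
      rw [SmoothPartitionOfUnity.mem_finsupport]
      intro h0
      apply hj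
      simp only at h0
      simp [h0]
  have hnn : ∀ j w, 0 ≤ ρ j w := fun j w => ρ.nonneg j w
  refine ⟨fun w => ∑ᶠ j, ρ j w • c j, ?_, ?_, ?_, ?_, ?_⟩
  · exact (ρ.contMDiff_finsum_smul (g := fun j _ => c j)
      (fun i x _ => contMDiffAt_const)).contDiff
  · intro w
    show 0 < ∑ᶠ j, ρ j w • c j
    rw [hfin w _ subset_rfl]
    have h1 := ρ.sum_finsupport (x₀ := w) (mem_univ w)
    by_contra hcon
    have h0 : ∑ j ∈ ρ.finsupport w, ρ j w * c j = 0 :=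
      le_antisymm (not_lt.1 hcon)
        (Finset.sum_nonneg fun j _ => mul_nonneg (hnn j w) (hcpos j).le)
    rw [Finset.sum_eq_zero_iff_of_nonneg
      (fun j _ => mul_nonneg (hnn j w) (hcpos j).le)] at h0
    rw [Finset.sum_eq_zero] at h1
    · norm_num at h1
    · intro j hj
      have := h0 j hj
      rcases mul_eq_zero.1 this with h | h
      · exact h
      · exact absurd h (hcpos j).ne'
  · intro w
    show ∑ᶠ j, ρ j w • c j ≤ 1
    rw [hfin w _ subset_rfl, ← ρ.sum_finsupport (x₀ := w) (mem_univ w)]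
    exact Finset.sum_le_sum fun j _ => mul_le_of_le_one_right (hnn j w) (hc1 j)
  · intro w w'
    classical
    show |∑ᶠ j, ρ j w • c j - ∑ᶠ j, ρ j w' • c j| ≤ _
    set S := ρ.finsupport w ∪ ρ.finsupport w'
    rw [hfin w S Finset.subset_union_left, hfin w' S Finset.subset_union_right,
      ← Finset.sum_sub_distrib]
    refine (Finset.abs_sum_le_sum_abs _ _).trans ?_
    have h1 : ∀ j ∈ S, |ρ j w * c j - ρ j w' * c j| ≤ (1/2)^(j+1) * ‖w - w'‖ := by
      intro j _
      rw [← sub_mul, abs_mul, abs_of_pos (hcpos j)]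
      have := (hL j).norm_sub_le w w'
      rw [Real.norm_eq_abs] at this
      calc _ ≤ (L j * ‖w - w'‖) * c j := by gcongr; exact (hcpos j).le
        _ = (c j * L j) * ‖w - w'‖ := by ring
        _ ≤ _ := by gcongr; exact hcL j
    refine (Finset.sum_le_sum h1).trans ?_
    rw [← Finset.sum_mul]
    have h2 : ∑ j ∈ S, (1/2:ℝ)^(j+1) ≤ 1 := by
      have hs : HasSum (fun j : ℕ => (1/2:ℝ)^(j+1)) 1 := by
        have := hasSum_geometric_two.mul_left (1/2)
        simpa [pow_succ, mul_comm] using this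
      exact sum_le_hasSum S (fun _ _ => by positivity) hs
    exact mul_le_of_le_one_left (norm_nonneg _) h2
  · intro w m hm
    show m * ∑ᶠ j, ρ j w • c j ≤ 1
    rw [hfin w _ subset_rfl, ← ρ.sum_finsupport (x₀ := w) (mem_univ w), Finset.mul_sum]
    refine Finset.sum_le_sum fun j hj => ?_
    have hjw : ‖w‖ < j + 1 := by
      have : w ∈ tsupport (ρ j) := subset_tsupport _ ((ρ.mem_finsupport w).1 hj)
      simpa using hρ j this
    calc m * (ρ j w * c j) ≤ B j * (ρ j w * c j) :=
          mul_le_mul_of_nonneg_right (hm j hjw) (mul_nonneg (hnn j w) (hcpos j).le)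
      _ = ρ j w * (c j * B j) := by ring
      _ ≤ ρ j w := mul_le_of_le_one_right (hnn j w) (hcB j)

lemma exists_smoothing {E : Type*} [NormedAddCommGroup E] [InnerProductSpace ℝ E]
    [FiniteDimensional ℝ E] [MeasurableSpace E] [BorelSpace E]
    (ε : E → ℝ) (hε : ContDiff ℝ ∞ ε) (hpos : ∀ w, 0 < ε w) (hle : ∀ w, ε w ≤ 1)
    {X : Type*} [TopologicalSpace X] [CompactSpace X]
    (φ : ContDiffBump (0:E)) (hφ : φ.rOut = 1)
    (g : E → C(X, ℝ)) (hg : Continuous g) :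
    ∃ H : E → C(X, ℝ), ContDiff ℝ ∞ H ∧
      ∀ w s, H w s = ∫ y, φ.normed volume y * g (w - ε w • y) s := by
  set d := Module.finrank ℝ E
  set k : E → E → ℝ := fun p x => (ε p ^ d)⁻¹ * φ.normed volume ((ε p)⁻¹ • x) with hk
  set L := (ContinuousLinearMap.lsmul ℝ ℝ (E := C(X, ℝ))).flip with hL
  have hkc : ContDiff ℝ ∞ (fun q : E × E => k q.1 q.2) := by
    have h1 : ContDiff ℝ ∞ (fun q : E × E => (ε q.1)) := hε.comp contDiff_fst
    have h2 : ContDiff ℝ ∞ (fun q : E × E => (ε q.1)⁻¹) := h1.inv (fun q => (hpos _).ne')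
    have h3 : ContDiff ℝ ∞ (fun q : E × E => (ε q.1 ^ d)⁻¹) :=
      (h1.pow d).inv (fun q => (pow_pos (hpos _) _).ne')
    exact h3.mul (φ.contDiff_normed.comp (h2.smul contDiff_snd))
  have hzero : ∀ x : E, 1 ≤ ‖x‖ → φ.normed volume x = 0 := by
    intro x hx
    by_contra h
    have : x ∈ Function.support (φ.normed volume) := h
    rw [φ.support_normed_eq, hφ] at this
    simp at this
    linarith
  have hks : ∀ p x, p ∈ (univ : Set E) → x ∉ Metric.closedBall (0:E) 1 → k p x = 0 := by
    intro p x _ hx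
    simp only [Metric.mem_closedBall, dist_zero_right, not_le] at hx
    have : φ.normed volume ((ε p)⁻¹ • x) = 0 := by
      apply hzero
      rw [norm_smul, norm_inv, Real.norm_eq_abs, abs_of_pos (hpos p)]
      have : 1 ≤ (ε p)⁻¹ := (one_le_inv₀ (hpos p)).2 (hle p)
      nlinarith
    simp [hk, this]
  have hconv := contDiffOn_convolution_right_with_param (𝕜 := ℝ) (μ := (volume : Measure E))
    (n := ⊤) L isOpen_univ (isCompact_closedBall (0:E) 1) hks hg.locallyIntegrable
    (hkc.contDiffOn)
  rw [univ_prod_univ, contDiffOn_univ] at hconv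
  refine ⟨fun w => (g ⋆[L, volume] k w) w, hconv.comp (contDiff_id.prodMk contDiff_id), ?_⟩
  intro w s
  have hint : Integrable (fun x => L (g x) (k w (w - x))) volume := by
    apply Continuous.integrable_of_hasCompactSupport
    · have : Continuous (fun x => k w (w - x)) :=
        hkc.continuous.comp (continuous_const.prodMk (continuous_const.sub continuous_id))
      simp only [hL, ContinuousLinearMap.flip_apply, ContinuousLinearMap.lsmul_apply]
      exact this.smul hg
    · apply HasCompactSupport.intro (isCompact_closedBall w 1)
      intro x hx
      rw [hks w (w - x) (mem_univ _) _, map_zero]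
      simpa [dist_eq_norm, norm_sub_rev] using hx
  have h1 : (g ⋆[L, volume] k w) w s = ∫ x, k w (w - x) * g x s := by
    rw [convolution_def]
    have := (ContinuousMap.evalCLM ℝ s : C(X,ℝ) →L[ℝ] ℝ).integral_comp_comm hint
    exact this.symm
  rw [h1, ← integral_sub_left_eq_self (fun x => k w (w - x) * g x s) volume w]
  have h2 := Measure.integral_comp_smul_of_nonneg (volume : Measure E)
    (fun x => φ.normed volume ((ε w)⁻¹ • x) * g (w - x) s) (ε w) (hR := (hpos w).le)
  simp only [inv_smul_smul₀ (hpos w).ne'] at h2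
  rw [h2, smul_eq_mul, ← integral_const_mul]
  simp [hk, mul_assoc, d]

lemma continuous_cmm {E : Type*} [NormedAddCommGroup E] [NormedSpace ℝ E]
    [FiniteDimensional ℝ E] {X : Type*} [TopologicalSpace X] {k : ℕ}
    (A : X → ContinuousMultilinearMap ℝ (fun _ : Fin k => E) ℝ)
    (hA : ∀ v, Continuous (fun x => A x v)) : Continuous A := by
  let b := Module.finBasis ℝ E
  let Φ : ContinuousMultilinearMap ℝ (fun _ : Fin k => E) ℝ →ₗ[ℝ]
      ((Fin k → Fin (Module.finrank ℝ E)) → ℝ) :=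
    { toFun := fun M i => M (fun j => b (i j))
      map_add' := fun _ _ => rfl
      map_smul' := fun _ _ => rfl }
  have hΦ : Function.Injective Φ := by
    intro M N h
    apply ContinuousMultilinearMap.toMultilinearMap_injective
    apply Module.Basis.ext_multilinear (fun _ => b)
    intro i
    exact congrFun h i
  have : FiniteDimensional ℝ (ContinuousMultilinearMap ℝ (fun _ : Fin k => E) ℝ) :=
    FiniteDimensional.of_injective Φ hΦ
  have hemb := LinearMap.isClosedEmbedding_of_injective (LinearMap.ker_eq_bot.2 hΦ)
  rw [hemb.isInducing.continuous_iff]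
  exact continuous_pi fun i => hA _

lemma continuous_eval_iter {E : Type*} [NormedAddCommGroup E] [NormedSpace ℝ E]
    [FiniteDimensional ℝ E] {X : Type*} [TopologicalSpace X] [CompactSpace X]
    (H : E → C(X, ℝ)) (hH : ContDiff ℝ ∞ H) (k : ℕ) :
    Continuous (fun p : X × E => iteratedFDeriv ℝ k (fun w => H w p.1) p.2) := by
  have h : ∀ p : X × E, iteratedFDeriv ℝ k (fun w => H w p.1) p.2 =
      (ContinuousMap.evalCLM ℝ p.1 : C(X,ℝ) →L[ℝ] ℝ).compContinuousMultilinearMap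
        (iteratedFDeriv ℝ k H p.2) := fun p =>
    (ContinuousMap.evalCLM ℝ p.1 : C(X,ℝ) →L[ℝ] ℝ).iteratedFDeriv_comp_left
      (hH.contDiffAt (x := p.2)) (i := k) (by exact_mod_cast le_top)
  apply continuous_cmm
  intro v
  simp only [h]
  have h1 : Continuous (fun w => iteratedFDeriv ℝ k H w v) :=
    (ContinuousMultilinearMap.apply ℝ _ _ v).continuous.comp
      (hH.continuous_iteratedFDeriv (by exact_mod_cast le_top))
  have : Continuous (fun p : X × E => (iteratedFDeriv ℝ k H p.2 v) p.1) := by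
    have := h1.comp (continuous_snd (X := X) (Y := E))
    fun_prop
  exact this

lemma smoothing_bounds {E : Type*} [NormedAddCommGroup E] [InnerProductSpace ℝ E]
    [FiniteDimensional ℝ E] [MeasurableSpace E] [BorelSpace E]
    (φ : ContDiffBump (0:E)) (hφ : φ.rOut = 1) (g : E → ℝ) (hg : Continuous g)
    (K : ℝ) (hK : 0 ≤ K) (hlip : ∀ w w', |g w - g w'| ≤ K * ‖w - w'‖)
    (w w' : E) (a b : ℝ) :
    |(∫ y, φ.normed volume y * g (w - a • y)) - ∫ y, φ.normed volume y * g (w' - b • y)|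
      ≤ K * (‖w - w'‖ + |a - b|) := by
  have hint : ∀ (w : E) (a : ℝ), Integrable (fun y => φ.normed volume y * g (w - a • y)) := by
    intro w a
    apply Continuous.integrable_of_hasCompactSupport
    · exact φ.continuous_normed.mul (hg.comp (by fun_prop))
    · exact φ.hasCompactSupport_normed.mul_right
  rw [← integral_sub (hint w a) (hint w' b)]
  have hpt : ∀ y, ‖φ.normed volume y * g (w - a • y) - φ.normed volume y * g (w' - b • y)‖
      ≤ φ.normed volume y * (K * (‖w - w'‖ + |a - b|)) := by
    intro y
    rw [← mul_sub, norm_mul, Real.norm_eq_abs, abs_of_nonneg (φ.nonneg_normed y)]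
    by_cases hy : ‖y‖ < 1
    · refine mul_le_mul_of_nonneg_left ?_ (φ.nonneg_normed y)
      refine (hlip _ _).trans (mul_le_mul_of_nonneg_left ?_ hK)
      have : w - a • y - (w' - b • y) = (w - w') - (a - b) • y := by
        rw [sub_smul]; abel
      rw [this]
      refine (norm_sub_le _ _).trans ?_
      rw [norm_smul, Real.norm_eq_abs]
      have := mul_le_of_le_one_right (abs_nonneg (a - b)) hy.le
      linarith
    · have : φ.normed volume y = 0 := by
        by_contra h
        have : y ∈ Function.support (φ.normed volume) := h
        rw [φ.support_normed_eq, hφ] at this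
        simp at this
        exact hy this
      simp [this]
  have := norm_integral_le_of_norm_le (φ.integrable_normed.mul_const _)
    (Eventually.of_forall hpt)
  rw [integral_mul_const, φ.integral_normed, one_mul] at this
  exact this

end aux

/-- Lemma: mollification of `Ĝ` keeping the estimates. -/
theorem Gstar_exists
    (n : ℕ) (C₅ : ℝ) (hC₅ : 0 < C₅)
    (Ghat : ℝ → EuclideanSpace ℝ (Fin (2 * n)) → ℝ)
    (hGcont : ContinuousOn (fun p : ℝ × EuclideanSpace ℝ (Fin (2 * n)) => Ghat p.1 p.2)
      (Set.Icc (0:ℝ) 1 ×ˢ (Set.univ : Set (EuclideanSpace ℝ (Fin (2 * n))))))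
    (hGlip : ∀ t ∈ Set.Ioc (0:ℝ) 1, ∀ w w' : EuclideanSpace ℝ (Fin (2 * n)),
      |Ghat t w - Ghat t w'| ≤ C₅ / t ^ 2 * ‖w - w'‖)
    (f : ℝ → EuclideanSpace ℝ (Fin (2 * n)) → ℝ)
    (hf : ContDiff ℝ (⊤ : ℕ∞) (fun p : ℝ × EuclideanSpace ℝ (Fin (2 * n)) => f p.1 p.2))
    (hf01 : ∀ t w, f t w ∈ Set.Icc (0:ℝ) 1) :
    ∃ Gstar : ℝ → EuclideanSpace ℝ (Fin (2 * n)) → ℝ,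
      ContinuousOn (fun p : ℝ × EuclideanSpace ℝ (Fin (2 * n)) => Gstar p.1 p.2)
        (Set.Icc (0:ℝ) 1 ×ˢ (Set.univ : Set (EuclideanSpace ℝ (Fin (2 * n))))) ∧
      SmoothInSecond n Gstar ∧
      ∀ t ∈ Set.Ioc (0:ℝ) 1, ∀ w : EuclideanSpace ℝ (Fin (2 * n)),
        ‖gradient (f t) w‖ * |Gstar t w - Ghat t w| ≤ C₅ / t ^ 2 ∧
        ‖gradient (Gstar t) w‖ ≤ 2 * C₅ / t ^ 2 := by
  have hgrad : Continuous (fun p : ℝ × EuclideanSpace ℝ (Fin (2 * n)) =>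
      fderiv ℝ (f p.1) p.2) := by
    have h1 : ContDiff ℝ (⊤ : ℕ∞) (Function.uncurry
        (fun (p : ℝ × EuclideanSpace ℝ (Fin (2 * n))) (w : EuclideanSpace ℝ (Fin (2 * n))) =>
          f p.1 w)) :=
      hf.comp ((contDiff_fst.comp contDiff_fst).prodMk contDiff_snd)
    exact (ContDiff.fderiv (n := 0) h1 contDiff_snd (by norm_num)).continuous
  have hgn : ∀ (h : EuclideanSpace ℝ (Fin (2 * n)) → ℝ) w, ‖gradient h w‖ = ‖fderiv ℝ h w‖ := by
    intro h w
    simp [gradient]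
  have hB : ∀ j : ℕ, ∃ B : ℝ, 0 ≤ B ∧ ∀ t ∈ Set.Icc (0:ℝ) 1,
      ∀ w : EuclideanSpace ℝ (Fin (2 * n)), ‖w‖ < j + 1 → ‖gradient (f t) w‖ ≤ B := by
    intro j
    obtain ⟨B, hB⟩ := ((isCompact_Icc (a := (0:ℝ)) (b := 1)).prod
      (isCompact_closedBall (0 : EuclideanSpace ℝ (Fin (2 * n))) (j+1))).exists_bound_of_continuousOn
      hgrad.continuousOn
    refine ⟨max B 0, le_max_right _ _, fun t ht w hw => ?_⟩
    rw [hgn]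
    exact (hB (t, w) ⟨ht, by simpa using hw.le⟩).trans (le_max_left _ _)
  choose B hB0 hB using hB
  obtain ⟨ε, hε, hpos, hle, hεlip, hεB⟩ :=
    exists_eps (E := EuclideanSpace ℝ (Fin (2 * n))) B hB0
  let φ : ContDiffBump (0 : EuclideanSpace ℝ (Fin (2 * n))) := ⟨1/2, 1, by norm_num, by norm_num⟩
  have hunc : Continuous (fun q : EuclideanSpace ℝ (Fin (2 * n)) × Set.Icc (0:ℝ) 1 =>
      Ghat q.2 q.1) :=
    hGcont.comp_continuous (f := fun q : EuclideanSpace ℝ (Fin (2 * n)) × Set.Icc (0:ℝ) 1 =>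
      ((q.2 : ℝ), q.1)) (by fun_prop) (fun q => ⟨q.2.2, Set.mem_univ _⟩)
  let g : C(EuclideanSpace ℝ (Fin (2 * n)), C(Set.Icc (0:ℝ) 1, ℝ)) := ContinuousMap.curry ⟨_, hunc⟩
  have hgs : ∀ w s, g w s = Ghat s w := fun w s => rfl
  obtain ⟨H, hH, hHeq⟩ := exists_smoothing ε hε hpos hle φ rfl g g.continuous
  have h01 : (0:ℝ) ≤ 1 := zero_le_one
  refine ⟨fun t w => H w (Set.projIcc 0 1 h01 t), ?_, ⟨?_, ?_⟩, ?_⟩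
  · have h1 : Continuous (fun p : ℝ × EuclideanSpace ℝ (Fin (2 * n)) => H p.2) :=
      hH.continuous.comp continuous_snd
    have h2 : Continuous (fun p : ℝ × EuclideanSpace ℝ (Fin (2 * n)) => Set.projIcc 0 1 h01 p.1) :=
      continuous_projIcc.comp continuous_fst
    have h3 : Continuous (fun p : ℝ × EuclideanSpace ℝ (Fin (2 * n)) =>
      H p.2 (Set.projIcc 0 1 h01 p.1)) := by fun_prop
    exact h3.continuousOn
  · intro t _
    exact (ContinuousMap.evalCLM ℝ (Set.projIcc 0 1 h01 t) :
      C(Set.Icc (0:ℝ) 1,ℝ) →L[ℝ] ℝ).contDiff.comp hH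
  · intro k
    exact ((continuous_eval_iter H hH k).comp
      ((continuous_projIcc (h := h01)).prodMap continuous_id)).continuousOn
  · intro t ht w
    have hp : Set.projIcc 0 1 h01 t = ⟨t, ht.1.le, ht.2⟩ := Set.projIcc_of_mem _ _
    have ht2 : 0 < t ^ 2 := pow_pos ht.1 2
    have hK : 0 ≤ C₅ / t ^ 2 := by positivity
    have hGt : Continuous (Ghat t) :=
      hunc.comp (f := fun w => (w, (⟨t, ht.1.le, ht.2⟩ : Set.Icc (0:ℝ) 1)))
        (continuous_id.prodMk continuous_const)
    have key : ∀ w w' a b, _ := smoothing_bounds φ rfl (Ghat t) hGt _ hK (hGlip t ht)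
    have hHt : ∀ w, H w ⟨t, ht.1.le, ht.2⟩ =
        ∫ y, φ.normed MeasureTheory.volume y * Ghat t (w - ε w • y) := fun w => hHeq w _
    simp only [hp]
    constructor
    · have h0 : Ghat t w = ∫ y, φ.normed MeasureTheory.volume y * Ghat t (w - (0:ℝ) • y) := by
        simp [MeasureTheory.integral_mul_const, φ.integral_normed]
      have h1 := key w w (ε w) 0
      rw [← h0, ← hHt, sub_self, norm_zero, zero_add, sub_zero, abs_of_pos (hpos w)] at h1
      have h2 := hεB w ‖gradient (f t) w‖ (fun j hj => hB j t ⟨ht.1.le, ht.2⟩ w hj)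
      calc _ ≤ ‖gradient (f t) w‖ * (C₅ / t ^ 2 * ε w) := by gcongr
        _ = C₅ / t ^ 2 * (‖gradient (f t) w‖ * ε w) := by ring
        _ ≤ C₅ / t ^ 2 * 1 := by gcongr
        _ = _ := mul_one _
    · have hL : LipschitzWith (Real.toNNReal (2 * C₅ / t ^ 2))
          (fun w => H w ⟨t, ht.1.le, ht.2⟩) := by
        apply LipschitzWith.of_dist_le_mul
        intro x y
        rw [Real.coe_toNNReal _ (by positivity), Real.dist_eq, dist_eq_norm, hHt, hHt]
        refine (key x y (ε x) (ε y)).trans ?_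
        calc _ ≤ C₅ / t ^ 2 * (‖x - y‖ + ‖x - y‖) := by gcongr; exact hεlip x y
          _ = _ := by ring
      rw [hgn]
      have := norm_fderiv_le_of_lipschitz ℝ hL (x₀ := w)
      rwa [Real.coe_toNNReal _ (by positivity)] at this
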